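/- arXiv:2507.07490 — 4 statements merged into one kernel-verified Lean document; each statement's English description precedes it below -/
import Mathlib

section
/- Let hospitals' preferences satisfy CPI with respect to a common strict linear order P⁰_hp over individual doctors. If P⁰_hp does not satisfy SCPI, then there exists an RVT extension of P⁰_hp (a preference profile in which the hospitals' preferences satisfy CPI with respect to P⁰_hp and every couple's preference satisfies RVT) at which no stable matching exists. -/
/-!
Let `{f, m}` be a couple violating SCPI. The hospitals' preferences are additive over sets; every
couple but `{f, m}` has a responsive preference, while `{f, m}` values togetherness above anything
else. Fix a hospital `h` and a set `T` of exactly `κ h` doctors ranked above `m`, containing `f` and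
some doctor `d0` between `f` and `m`. The doctors of `T` and `m` like `h` best, all others like it
least.

In a stable matching nobody is unemployed, hence all hospitals are full. A doctor outside `{f, m}`
ranked above `m` never prefers the hospital of `m` to their own, since they could replace `m`
(`Stable.not_move`). So `m` is not at `h`: otherwise `T` is not entirely at `h`, and either some
`t ∈ T`, `t ≠ f`, moves to `h`, or only `f` is missing and `f` joins `m` there in place of `d0`.
Consequently `h` employs nobody outside `T`: a doctor above `m` would move to the hospital of `m`,
and a doctor below `m` would make `h` interested in `{f, m}`, for weights under which two doctors
ranked at least as high as `m` outweigh any pair with a doctor below `m`. Thus `h` employs exactly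
`T`, so `f` is at `h` and `m` at some `g ≠ h`, and it remains to find a hospital where the couple
can be together.

* If some doctor `e` is ranked below `m`, the hospital of `e` accepts `{f, m}`.
* If `m` is the lowest-ranked doctor, there are two doctors `d0` and `d2` between `f` and `m`. Leave
  `d2` outside `T`, and choose `h' ≠ h` such that `d2` likes `h'` best while the other doctors
  outside `T ∪ {m}` dislike only `h` more. If `m` is at `h'`, then `d2` also is there by
  `Stable.not_move`, and `f` joins `m` in place of `d2`. Otherwise some `v ≠ d2` at `h'` moves to
  the hospital of `m`.
-/

namespace CouplesMarket

/-- A strict preference: an irreflexive, transitive, total (trichotomous) relation,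
i.e. the strict part of a linear order. -/
def IsStrictPref {α : Type*} (P : α → α → Prop) : Prop :=
  (∀ x, ¬ P x x) ∧ (∀ x y z, P x y → P y z → P x z) ∧ (∀ x y, x ≠ y → P x y ∨ P y x)

/-- A doctor's preference over `H ∪ {∅}` (`none` = unmatched): a strict linear order
ranking every hospital above `∅`. -/
def IsDoctorPref {H : Type*} (P : Option H → Option H → Prop) : Prop :=
  IsStrictPref P ∧ ∀ h : H, P (some h) none

/-- A hospital's preference over individual doctors, i.e. over `D ∪ {∅}`:
a strict linear order ranking every doctor above `∅`. -/
def IsHospIndivPref {D : Type*} (P : Option D → Option D → Prop) : Prop :=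
  IsStrictPref P ∧ ∀ d : D, P (some d) none

/-- A hospital's preference over feasible sets of doctors: a strict linear order on
the sets of cardinality at most `κ`. -/
def IsFeasiblePref {D : Type*} (κ : ℕ) (P : Finset D → Finset D → Prop) : Prop :=
  (∀ A, ¬ P A A) ∧
  (∀ A B C : Finset D, A.card ≤ κ → B.card ≤ κ → C.card ≤ κ → P A B → P B C → P A C) ∧
  (∀ A B : Finset D, A.card ≤ κ → B.card ≤ κ → A ≠ B → P A B ∨ P B A)

/-- The finset associated to an element of `D ∪ {∅}`. -/
def optSet {D : Type*} [DecidableEq D] : Option D → Finset D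
  | none => ∅
  | some d => {d}

/-- Responsiveness of a hospital's preference `P` over feasible sets (w.r.t. capacity `κ`)
with respect to a preference `Pt` over individual doctors. -/
def Responsive {D : Type*} [Fintype D] [DecidableEq D] (κ : ℕ)
    (P : Finset D → Finset D → Prop) (Pt : Option D → Option D → Prop) : Prop :=
  (∀ x y : Option D, P (optSet x) (optSet y) ↔ Pt x y) ∧
  (∀ D' D1 D2 : Finset D, D' ≠ Finset.univ → Disjoint D1 D' → Disjoint D2 D' →
    (D' ∪ D1).card ≤ κ → (D' ∪ D2).card ≤ κ →
    (P (D' ∪ D1) (D' ∪ D2) ↔ P D1 D2))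

/-- A matching: an assignment of doctors to hospitals (or to `none`) respecting capacities.
(The set matched to a hospital `h` is recovered as the set of doctors assigned to `h`.) -/
structure Matching (H D : Type*) [Fintype D] [DecidableEq H] (κ : H → ℕ) where
  assign : D → Option H
  card_le : ∀ h : H, (Finset.univ.filter (fun d => assign d = some h)).card ≤ κ h

/-- The set of doctors matched to hospital `h`. -/
def Matching.toSet {H D : Type*} [Fintype D] [DecidableEq H] {κ : H → ℕ}
    (μ : Matching H D κ) (h : H) : Finset D :=
  Finset.univ.filter (fun d => μ.assign d = some h)

/-- Hospital `h` is interested in the set of doctors `A` at matching `μ`. -/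
def hospInterested {H D : Type*} [Fintype D] [DecidableEq H] [DecidableEq D] {κ : H → ℕ}
    (Ph : H → Finset D → Finset D → Prop) (μ : Matching H D κ) (h : H) (A : Finset D) : Prop :=
  ∃ B ⊆ μ.toSet h, ((μ.toSet h \ B) ∪ A).card ≤ κ h ∧ Ph h ((μ.toSet h \ B) ∪ A) (μ.toSet h)

/-- A hospital `h` and a single doctor `s` block the matching `μ`. -/
def blocksSingle {H D : Type*} [Fintype D] [DecidableEq H] [DecidableEq D] {κ : H → ℕ}
    (Pd : D → Option H → Option H → Prop) (Ph : H → Finset D → Finset D → Prop)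
    (μ : Matching H D κ) (h : H) (s : D) : Prop :=
  Pd s (some h) (μ.assign s) ∧ hospInterested Ph μ h {s}

/-- A pair of hospitals `(hf, hm)` and the couple `{f, m}` (with preference `Pc`)
block the matching `μ`. -/
def blocksCouple {H D : Type*} [Fintype D] [DecidableEq H] [DecidableEq D] {κ : H → ℕ}
    (Ph : H → Finset D → Finset D → Prop)
    (Pc : Option H × Option H → Option H × Option H → Prop)
    (f m : D) (μ : Matching H D κ) (hf hm : H) : Prop :=
  Pc (some hf, some hm) (μ.assign f, μ.assign m) ∧
  (hf ≠ hm → μ.assign f ≠ some hf → μ.assign m ≠ some hm →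
    hospInterested Ph μ hf {f} ∧ hospInterested Ph μ hm {m}) ∧
  (hf ≠ hm → μ.assign f = some hf → μ.assign m ≠ some hm → hospInterested Ph μ hm {m}) ∧
  (hf ≠ hm → μ.assign m = some hm → μ.assign f ≠ some hf → hospInterested Ph μ hf {f}) ∧
  (hf = hm → hospInterested Ph μ hf {f, m})

/-- Stability of a matching `μ` in a market whose couples are `{fd i, md i}`, `i : Fin k`,
all other doctors being single. -/
def Stable {H D : Type*} [Fintype D] [DecidableEq H] [DecidableEq D] {κ : H → ℕ} {k : ℕ}
    (fd md : Fin k → D)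
    (Pd : D → Option H → Option H → Prop)
    (Pc : Fin k → Option H × Option H → Option H × Option H → Prop)
    (Ph : H → Finset D → Finset D → Prop)
    (μ : Matching H D κ) : Prop :=
  (∀ (h : H) (s : D), (∀ i, s ≠ fd i ∧ s ≠ md i) → ¬ blocksSingle Pd Ph μ h s) ∧
  (∀ (i : Fin k) (hf hm : H), ¬ blocksCouple Ph (Pc i) (fd i) (md i) μ hf hm)

/-- A couple's preference over `(H ∪ {∅})²`: a strict linear order ranking every pair of
hospitals above every pair with at least one unmatched component. -/
def IsCouplePref {H : Type*} (P : Option H × Option H → Option H × Option H → Prop) : Prop :=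
  IsStrictPref P ∧
  ∀ (h h' : H) (p : Option H × Option H), (p.1 = none ∨ p.2 = none) → P (some h, some h') p

/-- Responsiveness of a couple's preference with respect to the members'
individual preferences `Pf` and `Pm`. -/
def ResponsiveCouple {H : Type*} (Pf Pm : Option H → Option H → Prop)
    (P : Option H × Option H → Option H × Option H → Prop) : Prop :=
  (∀ h h1 h2 : Option H, P (h, h1) (h, h2) ↔ Pm h1 h2) ∧
  (∀ h h1 h2 : Option H, P (h1, h) (h2, h) ↔ Pf h1 h2)

/-- `Pbar` satisfies RVT (responsiveness violated only for togetherness) with respect to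
the members' individual preferences `Pf`, `Pm`. -/
def RVT {H : Type*} (Pf Pm : Option H → Option H → Prop)
    (Pbar : Option H × Option H → Option H × Option H → Prop) : Prop :=
  ∃ P : Option H × Option H → Option H × Option H → Prop,
    IsStrictPref P ∧ ResponsiveCouple Pf Pm P ∧
    (∀ (h : H) (p : Option H × Option H), P (some h, some h) p → Pbar (some h, some h) p) ∧
    (∀ p q : Option H × Option H, p.1 ≠ p.2 → q.1 ≠ q.2 → (P p q ↔ Pbar p q))

/-- The RF ("responsive for F") property of a collection of couples' preferences:
`(h,h) P_c (h',h)` implies `h P_f h'`. -/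
def RF {H : Type*} {k : ℕ} (Pf : Fin k → Option H → Option H → Prop)
    (Pc : Fin k → Option H × Option H → Option H × Option H → Prop) : Prop :=
  ∀ (i : Fin k) (h h' : H), Pc i (some h, some h) (some h', some h) → Pf i (some h) (some h')

/-- The SRF ("strong RF") property of a collection of couples' preferences. -/
def SRF {H : Type*} {k : ℕ} (Pf Pm : Fin k → Option H → Option H → Prop)
    (Pc : Fin k → Option H × Option H → Option H × Option H → Prop) : Prop :=
  RF Pf Pc ∧
  ∀ (i : Fin k) (h h' : H), (∃ h'' : H, Pf i (some h'') (some h)) →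
    Pc i (some h, some h) (some h, some h') → Pm i (some h') (some h) →
    Pf i (some h') (some h)

/-- SCPI ("strong CPI") property of a common preference `P0` of the hospitals over
individual doctors. -/
def SCPI {H D : Type*} {k : ℕ} (κ : H → ℕ) (fd md : Fin k → D)
    (P0 : Option D → Option D → Prop) : Prop :=
  ∀ i : Fin k,
    ((∃ d : D, d ≠ md i ∧ P0 (some (md i)) (some d)) →
      ({d : D | P0 (some (fd i)) (some d) ∧ P0 (some d) (some (md i))}.ncard = 0 ∨
        ∀ h : H, {d : D | P0 (some d) (some (md i))}.ncard < κ h)) ∧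
    ((∀ d : D, d ≠ md i → P0 (some d) (some (md i))) →
      {d : D | P0 (some (fd i)) (some d) ∧ P0 (some d) (some (md i))}.ncard ≤ 1)


/-! ### Preferences given by utilities -/

/-- The preference represented by a utility `v`: larger values are preferred. -/
def utilPref {α β : Type*} [LT β] (v : α → β) : α → α → Prop := fun a b => v b < v a

/-- The additive preference over sets of doctors with individual weights `w`. -/
def setPref {D : Type*} (w : D → ℕ) : Finset D → Finset D → Prop :=
  fun A B => ∑ d ∈ B, w d < ∑ d ∈ A, w d

open Classical in
/-- The utility of a couple, compared lexicographically: first whether both members are employed,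
then (only when `b` holds) whether they are together, then the utility of the first member,
then that of the second. Without the second entry this is a responsive preference. -/
noncomputable def coupleVal {H : Type*} (b : Prop) (uf um : Option H → ℕ)
    (p : Option H × Option H) : ℕ ×ₗ ℕ ×ₗ ℕ ×ₗ ℕ :=
  toLex (if p.1 ≠ none ∧ p.2 ≠ none then 1 else 0,
    toLex (if b ∧ p.1 = p.2 then 1 else 0, toLex (uf p.1, um p.2)))

lemma isStrictPref_utilPref {α β : Type*} [LinearOrder β] {v : α → β}
    (hv : Function.Injective v) : IsStrictPref (utilPref v) :=
  ⟨fun _ => lt_irrefl _, fun _ _ _ h1 h2 => lt_trans h2 h1,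
    fun _ _ h => (lt_or_gt_of_ne (hv.ne h)).symm⟩

lemma coupleVal_injective {H : Type*} (b : Prop) {uf um : Option H → ℕ}
    (hf : Function.Injective uf) (hm : Function.Injective um) :
    Function.Injective (coupleVal b uf um) := by
  rintro ⟨p1, p2⟩ ⟨q1, q2⟩ h
  have h' := toLex.injective h
  simp only [Prod.mk.injEq] at h'
  have h2 := toLex.injective h'.2
  simp only [Prod.mk.injEq] at h2
  have h3 := toLex.injective h2.2
  simp only [Prod.mk.injEq] at h3
  rw [hf h3.1, hm h3.2]

lemma isCouplePref_coupleVal {H : Type*} (b : Prop) {uf um : Option H → ℕ}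
    (hf : Function.Injective uf) (hm : Function.Injective um) :
    IsCouplePref (utilPref (coupleVal b uf um)) := by
  refine ⟨isStrictPref_utilPref (coupleVal_injective b hf hm), ?_⟩
  rintro h h' ⟨p1, p2⟩ hp
  simp only [utilPref, coupleVal, Prod.Lex.toLex_lt_toLex]
  left
  rcases hp with hp | hp <;> simp_all

/-- Without the weight on togetherness, the couple's preference is responsive. -/
lemma responsiveCouple_coupleVal {H : Type*} {b : Prop} (hb : ¬ b) {uf um : Option H → ℕ}
    (hf0 : ∀ h, uf none < uf (some h)) (hm0 : ∀ h, um none < um (some h)) :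
    ResponsiveCouple (utilPref uf) (utilPref um) (utilPref (coupleVal b uf um)) := by
  obtain rfl : b = False := eq_false hb
  constructor
  · intro h h1 h2
    simp only [utilPref, coupleVal, Prod.Lex.toLex_lt_toLex]
    cases h <;> cases h1 <;> cases h2 <;> simp <;> grind
  · intro h h1 h2
    simp only [utilPref, coupleVal, Prod.Lex.toLex_lt_toLex]
    cases h <;> cases h1 <;> cases h2 <;> simp <;> grind

lemma rvt_coupleVal {H : Type*} (b : Prop) {uf um : Option H → ℕ}
    (hf : Function.Injective uf) (hm : Function.Injective um)
    (hf0 : ∀ h, uf none < uf (some h)) (hm0 : ∀ h, um none < um (some h)) :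
    RVT (utilPref uf) (utilPref um) (utilPref (coupleVal b uf um)) := by
  refine ⟨utilPref (coupleVal False uf um),
    isStrictPref_utilPref (coupleVal_injective _ hf hm),
    responsiveCouple_coupleVal (fun h => h) hf0 hm0, ?_, ?_⟩
  · rintro h ⟨p1, p2⟩
    simp only [utilPref, coupleVal, Prod.Lex.toLex_lt_toLex]
    by_cases hb : b <;> by_cases hp : p1 = p2 <;> simp [hb, hp]
    tauto
  · rintro ⟨p1, p2⟩ ⟨q1, q2⟩ hp hq
    simp only at hp hq
    simp [utilPref, coupleVal, Prod.Lex.toLex_lt_toLex, hp, hq]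

/-- A couple that values togetherness prefers `(g, g)` to any pair of distinct hospitals. -/
lemma coupleVal_together {H : Type*} {b : Prop} (hb : b) (uf um : Option H → ℕ) (g : H)
    {p : Option H × Option H} (hp : p.1 ≠ p.2) :
    utilPref (coupleVal b uf um) (some g, some g) p := by
  obtain ⟨p1, p2⟩ := p
  simp only at hp
  simp only [utilPref, coupleVal, Prod.Lex.toLex_lt_toLex, hb, hp]
  by_cases h : p1 ≠ none ∧ p2 ≠ none <;> simp [h]

/-- If `h` is the favourite hospital of both members, `(h, h)` is the couple's favourite pair. -/
lemma coupleVal_top {H : Type*} {b : Prop} {uf um : Option H → ℕ} {h : H}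
    (hf : ∀ a, a ≠ some h → uf a < uf (some h)) (hm : ∀ a, um a ≤ um (some h))
    {p : Option H × Option H} (hp : p.1 ≠ some h) :
    utilPref (coupleVal b uf um) (some h, some h) p := by
  obtain ⟨p1, p2⟩ := p
  simp only at hp
  have := hf p1 hp
  have := hm p2
  simp only [utilPref, coupleVal, Prod.Lex.toLex_lt_toLex]
  by_cases hb : b <;> by_cases h1 : p1 ≠ none ∧ p2 ≠ none <;> by_cases h2 : p1 = p2 <;>
    simp [hb, h1, h2] <;> grind

/-! ### Additive hospital preferences -/

lemma isFeasiblePref_setPref {D : Type*} {w : D → ℕ} (κ : ℕ)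
    (hw : ∀ A B : Finset D, ∑ d ∈ A, w d = ∑ d ∈ B, w d → A = B) :
    IsFeasiblePref κ (setPref w) :=
  ⟨fun _ => lt_irrefl _, fun _ _ _ _ _ _ h1 h2 => lt_trans h2 h1,
    fun A B _ _ h => (lt_or_gt_of_ne fun h' => h (hw A B h')).symm⟩

lemma responsive_setPref {D : Type*} [Fintype D] [DecidableEq D] {w : D → ℕ} (κ : ℕ)
    {P0 : Option D → Option D → Prop} (hP0 : IsHospIndivPref P0) (hpos : ∀ d, 0 < w d)
    (hw : ∀ a b, w b < w a ↔ P0 (some a) (some b)) :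
    Responsive κ (setPref w) P0 := by
  obtain ⟨⟨hirr, htr, -⟩, hnone⟩ := hP0
  constructor
  · rintro (_ | x) (_ | y)
    · simp [setPref, optSet, hirr]
    · have : ¬ P0 none (some y) := fun h => hirr _ (htr _ _ _ h (hnone y))
      simp [setPref, optSet, this]
    · simp [setPref, optSet, hnone, hpos]
    · simp [setPref, optSet, hw]
  · intro D' D1 D2 _ h1 h2 _ _
    simp only [setPref]
    rw [Finset.sum_union h1.symm, Finset.sum_union h2.symm]
    exact Nat.add_lt_add_iff_left

/-- A hospital with additive preferences is interested in `A` as soon as it gains by replacing some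
`X ⊆ μ(h)` with `Y`, where `Y` consists of the members of `A` it does not yet employ. -/
lemma hospInterested_of {H D : Type*} [Fintype D] [DecidableEq H] [DecidableEq D] {κ : H → ℕ}
    {w : D → ℕ} (μ : Matching H D κ) (h : H) (A X Y : Finset D) (hX : X ⊆ μ.toSet h)
    (hY : Disjoint Y (μ.toSet h)) (hYA : Y ⊆ A) (hA : A ⊆ Y ∪ (μ.toSet h \ X))
    (hc : (μ.toSet h).card + Y.card ≤ κ h + X.card) (hw : ∑ d ∈ X, w d < ∑ d ∈ Y, w d) :
    hospInterested (fun _ => setPref w) μ h A := by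
  have hU : (μ.toSet h \ X) ∪ A = (μ.toSet h \ X) ∪ Y := by
    ext a
    have := @hYA a
    have := @hA a
    simp only [Finset.mem_union, Finset.mem_sdiff] at *
    tauto
  have hd : Disjoint (μ.toSet h \ X) Y := (hY.mono_right Finset.sdiff_subset).symm
  refine ⟨X, hX, ?_, ?_⟩
  · rw [hU, Finset.card_union_of_disjoint hd, Finset.card_sdiff_of_subset hX]
    have := Finset.card_le_card hX
    omega
  · simp only [setPref]
    rw [hU, Finset.sum_union hd]
    have := Finset.sum_sdiff (f := w) hX
    omega

lemma mem_toSet {H D : Type*} [Fintype D] [DecidableEq H] {κ : H → ℕ}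
    {μ : Matching H D κ} {h : H} {d : D} : d ∈ μ.toSet h ↔ μ.assign d = some h := by
  simp [Matching.toSet]

section Blocking

variable {H D : Type*} [Fintype D] [DecidableEq H] [DecidableEq D] {κ : H → ℕ} {w : D → ℕ}
  {μ : Matching H D κ}

/-- Replacing one employee `y` by `x`, where any further member `p` of `A` is already employed. -/
lemma interested_replace {h : H} {x y : D} {A : Finset D} (hx : μ.assign x ≠ some h)
    (hy : μ.assign y = some h) (hw : w y < w x) (hxA : x ∈ A)
    (hA : ∀ p ∈ A, p = x ∨ (p ≠ y ∧ μ.assign p = some h)) :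
    hospInterested (fun _ => setPref w) μ h A := by
  refine hospInterested_of μ h A {y} {x} ?_ ?_ ?_ ?_ ?_ ?_
  · simpa [mem_toSet] using hy
  · simpa [mem_toSet] using hx
  · simpa using hxA
  · intro p hp
    have := hA p hp
    simp only [Finset.mem_union, Finset.mem_sdiff, Finset.mem_singleton, mem_toSet]
    tauto
  · have : (μ.toSet h).card ≤ κ h := μ.card_le h
    simpa using this
  · simpa using hw

/-- Replacing two employees. -/
lemma interested_replace_two {h : H} {x y f m : D} (hf : μ.assign f ≠ some h)
    (hm : μ.assign m ≠ some h) (hfm : f ≠ m) (hx : μ.assign x = some h)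
    (hy : μ.assign y = some h) (hxy : x ≠ y) (hw : w x + w y < w f + w m) :
    hospInterested (fun _ => setPref w) μ h {f, m} := by
  refine hospInterested_of μ h {f, m} {x, y} {f, m} ?_ ?_ (Finset.Subset.refl _)
    Finset.subset_union_left ?_ ?_
  · intro a ha
    simp only [Finset.mem_insert, Finset.mem_singleton] at ha
    rcases ha with rfl | rfl <;> simpa [mem_toSet]
  · simp [mem_toSet, hf, hm]
  · have : (μ.toSet h).card ≤ κ h := μ.card_le h
    rw [Finset.card_pair hfm, Finset.card_pair hxy]
    omega
  · rwa [Finset.sum_pair hfm, Finset.sum_pair hxy]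

/-- Filling a vacancy. -/
lemma interested_vacancy {h : H} {x : D} {A : Finset D} (hpos : ∀ d, 0 < w d)
    (hv : (μ.toSet h).card < κ h) (hx : μ.assign x ≠ some h) (hxA : x ∈ A)
    (hA : ∀ p ∈ A, p = x ∨ μ.assign p = some h) :
    hospInterested (fun _ => setPref w) μ h A := by
  refine hospInterested_of μ h A ∅ {x} (by simp) ?_ ?_ ?_ ?_ ?_
  · simpa [mem_toSet] using hx
  · simpa using hxA
  · intro p hp
    have := hA p hp
    simp only [Finset.mem_union, Finset.mem_sdiff, Finset.mem_singleton, mem_toSet]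
    simpa using this
  · simpa using hv
  · simpa using hpos x

variable {Pc : Option H × Option H → Option H × Option H → Prop}
  {Ph : H → Finset D → Finset D → Prop}

lemma blocksCouple_same {f m : D} {g : H} (hP : Pc (some g, some g) (μ.assign f, μ.assign m))
    (hI : hospInterested Ph μ g {f, m}) : blocksCouple Ph Pc f m μ g g :=
  ⟨hP, fun h => absurd rfl h, fun h => absurd rfl h, fun h => absurd rfl h, fun _ => hI⟩

lemma blocksCouple_left {f m : D} {g b : H} (hm : μ.assign m = some b)
    (hf : μ.assign f ≠ some g) (hP : Pc (some g, some b) (μ.assign f, some b))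
    (h1 : hospInterested Ph μ g {f}) (h2 : g = b → hospInterested Ph μ g {f, m}) :
    blocksCouple Ph Pc f m μ g b :=
  ⟨by rwa [hm], fun _ _ h => absurd hm h, fun _ h => absurd h hf, fun _ _ _ => h1, h2⟩

lemma blocksCouple_right {f m : D} {g b : H} (hf : μ.assign f = some b)
    (hm : μ.assign m ≠ some g) (hP : Pc (some b, some g) (some b, μ.assign m))
    (h1 : hospInterested Ph μ g {m}) (h2 : g = b → hospInterested Ph μ g {f, m}) :
    blocksCouple Ph Pc f m μ b g :=
  ⟨by rwa [hf], fun _ h => absurd hf h, fun _ _ _ => h1, fun _ h => absurd h hm,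
    fun h => h ▸ h2 h.symm⟩

end Blocking

/-! ### Stable matchings leave nobody unemployed -/

lemma sum_card_add_le {H D : Type*} [Fintype H] [Fintype D] [DecidableEq H] [DecidableEq D]
    {κ : H → ℕ} (μ : Matching H D κ) (U : Finset D) (hU : ∀ d ∈ U, μ.assign d = none) :
    ∑ h, (μ.toSet h).card + U.card ≤ Fintype.card D := by
  rw [← Finset.card_biUnion, ← Finset.card_union_of_disjoint]
  · exact Finset.card_le_univ _
  · rw [Finset.disjoint_left]
    intro a ha ha'
    simp only [Finset.mem_biUnion, Finset.mem_univ, true_and, mem_toSet] at ha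
    simp [hU a ha'] at ha
  · intro a _ b _ hab
    rw [Function.onFun, Finset.disjoint_left]
    intro x hx hx'
    rw [mem_toSet] at hx hx'
    exact hab (Option.some.inj (hx.symm.trans hx'))

lemma exists_vacancy {H D : Type*} [Fintype H] [Fintype D] [DecidableEq H] [DecidableEq D]
    {κ : H → ℕ} (hsum : ∑ h, κ h = Fintype.card D) (μ : Matching H D κ) {d : D}
    (hd : μ.assign d = none) : ∃ g, (μ.toSet g).card < κ g := by
  have h1 := sum_card_add_le μ {d} (by simpa using hd)
  simp only [Finset.card_singleton] at h1
  obtain ⟨g, -, hg⟩ := Finset.exists_lt_of_sum_lt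
    (show ∑ h, (μ.toSet h).card < ∑ h, κ h by omega)
  exact ⟨g, hg⟩

/-- As capacities sum to the number of doctors, two unemployed doctors mean two vacancies. -/
lemma exists_two_vacancies {H D : Type*} [Fintype H] [Fintype D] [DecidableEq H] [DecidableEq D]
    {κ : H → ℕ} (hsum : ∑ h, κ h = Fintype.card D) (μ : Matching H D κ) {a b : D} (hab : a ≠ b)
    (ha : μ.assign a = none) (hb : μ.assign b = none) {g : H}
    (hg : (μ.toSet g).card + 1 = κ g) : ∃ g', g' ≠ g ∧ (μ.toSet g').card < κ g' := by
  have h1 := sum_card_add_le μ {a, b} (by simp [ha, hb])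
  rw [Finset.card_pair hab, ← hsum, ← Finset.add_sum_erase _ _ (Finset.mem_univ g),
    ← Finset.add_sum_erase _ κ (Finset.mem_univ g)] at h1
  obtain ⟨g', hg', h⟩ := Finset.exists_lt_of_sum_lt
    (show ∑ h ∈ Finset.univ.erase g, (μ.toSet h).card < ∑ h ∈ Finset.univ.erase g, κ h by omega)
  exact ⟨g', (Finset.mem_erase.1 hg').1, h⟩

lemma Stable.all_matched {H D : Type*} [Fintype H] [Fintype D] [DecidableEq H] [DecidableEq D]
    {κ : H → ℕ} {k : ℕ} {fd md : Fin k → D} (hdisj : ∀ i j, fd i ≠ md j)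
    (hsum : ∑ h, κ h = Fintype.card D) {Pd : D → Option H → Option H → Prop}
    {Pc : Fin k → Option H × Option H → Option H × Option H → Prop} {w : D → ℕ}
    (hPd : ∀ d, IsDoctorPref (Pd d)) (hPc : ∀ i, IsCouplePref (Pc i)) (hpos : ∀ d, 0 < w d)
    {μ : Matching H D κ} (hμ : Stable fd md Pd Pc (fun _ => setPref w) μ) (d : D) :
    ∃ g, μ.assign d = some g := by
  by_contra hno
  have hd : μ.assign d = none := Option.eq_none_iff_forall_ne_some.2 fun g hg => hno ⟨g, hg⟩
  obtain ⟨g, hg⟩ := exists_vacancy hsum μ hd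
  have hcouple : ∀ j, μ.assign (fd j) ≠ none ∧ μ.assign (md j) ≠ none := by
    intro j
    have hne := hdisj j j
    rcases hf : μ.assign (fd j) with _ | a <;> rcases hm : μ.assign (md j) with _ | b
    · exfalso
      rcases Nat.lt_or_ge ((μ.toSet g).card + 1) (κ g) with h2 | h2
      · refine hμ.2 j g g (blocksCouple_same ((hPc j).2 _ _ _ (Or.inl hf)) ?_)
        refine hospInterested_of μ g _ ∅ {fd j, md j} (by simp) ?_ (Finset.Subset.refl _)
          Finset.subset_union_left ?_ ?_
        · simp [mem_toSet, hf, hm]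
        · rw [Finset.card_pair hne]; simp; omega
        · rw [Finset.sum_pair hne]
          have := hpos (fd j)
          simp; omega
      · obtain ⟨g', hg', hv⟩ := exists_two_vacancies hsum μ hne hf hm (g := g) (by omega)
        refine hμ.2 j g g' ⟨(hPc j).2 _ _ _ (Or.inl hf), fun _ _ _ => ⟨?_, ?_⟩, ?_, ?_, ?_⟩
        · exact interested_vacancy (x := fd j) hpos hg (by simp [hf]) (by simp) (by simp)
        · exact interested_vacancy (x := md j) hpos hv (by simp [hm]) (by simp) (by simp)
        · intro _ h; simp [hf] at h
        · intro _ h; simp [hm] at h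
        · intro h; exact absurd h.symm hg'
    · exfalso
      refine hμ.2 j g b (blocksCouple_left hm (by simp [hf]) ((hPc j).2 _ _ _ (Or.inl hf)) ?_ ?_)
      · exact interested_vacancy (x := fd j) hpos hg (by simp [hf]) (by simp) (by simp)
      · rintro rfl
        exact interested_vacancy hpos hg (x := fd j) (by simp [hf]) (by simp) (by simp [hm])
    · exfalso
      refine hμ.2 j a g (blocksCouple_right hf (by simp [hm]) ((hPc j).2 _ _ _ (Or.inr hm)) ?_ ?_)
      · exact interested_vacancy (x := md j) hpos hg (by simp [hm]) (by simp) (by simp)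
      · rintro rfl
        exact interested_vacancy hpos hg (x := md j) (by simp [hm]) (by simp) (by simp [hf])
    · simp
  by_cases hs : ∀ i, d ≠ fd i ∧ d ≠ md i
  · refine hμ.1 g d hs ⟨?_, interested_vacancy (x := d) hpos hg (by simp [hd]) (by simp)
      (by simp)⟩
    rw [hd]
    exact (hPd d).2 g
  · simp only [not_forall, not_and_or, not_not] at hs
    obtain ⟨j, rfl | rfl⟩ := hs
    · exact (hcouple j).1 hd
    · exact (hcouple j).2 hd

/-! ### The instability argument -/

section Core

variable {H D : Type*} [Fintype D] [DecidableEq H] [DecidableEq D] {κ : H → ℕ} {k : ℕ}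
  {fd md : Fin k → D} {u : D → Option H → ℕ} {w : D → ℕ} {i : Fin k} {μ : Matching H D κ}

/-- In a stable matching of the market where only couple `i` values togetherness, no doctor `x`
outside couple `i` prefers to their own hospital the one employing `md i`, if `x` is ranked above
`md i`: since `md i` is not the partner of `x`, the couple of `x` responds to this move alone. -/
lemma Stable.not_move (hdisj : ∀ i j, fd i ≠ md j)
    (hu0 : ∀ d g, u d none < u d (some g))
    (hμ : Stable fd md (fun d => utilPref (u d))
      (fun j => utilPref (coupleVal (j = i) (u (fd j)) (u (md j)))) (fun _ => setPref w) μ)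
    (hall : ∀ d, ∃ g, μ.assign d = some g) {x : D} {g : H} (hxf : x ≠ fd i) (hxm : x ≠ md i)
    (hmd : Function.Injective md) (hmg : μ.assign (md i) = some g) (hw : w (md i) < w x) :
    ¬ u x (μ.assign x) < u x (some g) := by
  intro hlt
  have hxg : μ.assign x ≠ some g := fun h => by simp [h] at hlt
  have hone : hospInterested (fun _ => setPref w) μ g {x} :=
    interested_replace hxg hmg hw (by simp) (by simp)
  by_cases hs : ∀ j, x ≠ fd j ∧ x ≠ md j
  · exact hμ.1 g x hs ⟨hlt, hone⟩
  simp only [not_forall, not_and_or, not_not] at hs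
  obtain ⟨j, rfl | rfl⟩ := hs
  · have hj : j ≠ i := fun h => hxf (by rw [h])
    obtain ⟨b, hb⟩ := hall (md j)
    have hresp := responsiveCouple_coupleVal (b := (j = i)) hj (hu0 (fd j)) (hu0 (md j))
    refine hμ.2 j g b (blocksCouple_left hb hxg ((hresp.2 _ _ _).2 hlt) hone ?_)
    rintro rfl
    refine interested_replace hxg hmg hw (by simp) ?_
    intro p hp
    simp only [Finset.mem_insert, Finset.mem_singleton] at hp
    rcases hp with rfl | rfl
    · exact Or.inl rfl
    · exact Or.inr ⟨hmd.ne hj, hb⟩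
  · have hj : j ≠ i := fun h => hxm (by rw [h])
    obtain ⟨b, hb⟩ := hall (fd j)
    have hresp := responsiveCouple_coupleVal (b := (j = i)) hj (hu0 (fd j)) (hu0 (md j))
    refine hμ.2 j b g (blocksCouple_right hb hxg ((hresp.1 _ _ _).2 hlt) hone ?_)
    rintro rfl
    refine interested_replace hxg hmg hw (by simp) ?_
    intro p hp
    simp only [Finset.mem_insert, Finset.mem_singleton] at hp
    rcases hp with rfl | rfl
    · exact Or.inr ⟨hdisj _ _, hb⟩
    · exact Or.inl rfl

/-- The market without stable matching. The set `T ∋ fd i` of doctors above `md i` fills `h`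
exactly and contains a doctor `d0` below `fd i`; the doctors of `T` and `md i` like `h` best, and
everybody else likes it least. In the last hypothesis, the first alternative is the case where
`md i` is not the lowest-ranked doctor, the second one that where it is. -/
lemma not_stable_core [Fintype H] (hdisj : ∀ i j, fd i ≠ md j) (hmd : Function.Injective md)
    (hκ : ∀ h, 2 ≤ κ h) (hsum : ∑ h, κ h = Fintype.card D)
    (hu : ∀ d, Function.Injective (u d)) (hu0 : ∀ d g, u d none < u d (some g))
    (hpos : ∀ d, 0 < w d)
    (hwfm : w (md i) < w (fd i))
    (hw2 : ∀ x y, w x < w (md i) → w x + w y < w (fd i) + w (md i))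
    (hwinj : Function.Injective w)
    {h : H} {T : Finset D} (hT : T.card = κ h) (hTm : ∀ t ∈ T, w (md i) < w t)
    (hfT : fd i ∈ T) {d0 : D} (hd0 : d0 ∈ T) (hd0f : w d0 < w (fd i))
    (htop : ∀ t, t ∈ T ∨ t = md i → ∀ g, g ≠ h → u t (some g) < u t (some h))
    (hlast : ∀ x, x ∉ T → x ≠ md i → ∀ g, g ≠ h → u x (some h) < u x (some g))
    (hfinal : (∃ e, w e < w (md i)) ∨ ((∀ x, x ≠ md i → w (md i) < w x) ∧
      ∃ h' d2, h' ≠ h ∧ d2 ∉ T ∧ w d2 < w (fd i) ∧ d2 ≠ md i ∧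
        (∀ g, g ≠ h' → u d2 (some g) < u d2 (some h')) ∧
        ∀ x, x ∉ T → x ≠ md i → x ≠ d2 → ∀ g, g ≠ h' → g ≠ h →
          u x (some h') < u x (some g))) :
    ¬ Stable fd md (fun d => utilPref (u d))
      (fun j => utilPref (coupleVal (j = i) (u (fd j)) (u (md j)))) (fun _ => setPref w) μ := by
  intro hμ
  set f := fd i with hf
  set m := md i with hm
  have hfm : f ≠ m := hdisj i i
  have hmT : m ∉ T := fun h => lt_irrefl _ (hTm m h)
  have hall : ∀ d, ∃ g, μ.assign d = some g := by
    refine hμ.all_matched hdisj hsum (fun d => ⟨isStrictPref_utilPref (hu d), hu0 d⟩)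
      (fun j => isCouplePref_coupleVal _ (hu _) (hu _)) hpos
  have hfull : ∀ g, (μ.toSet g).card = κ g := by
    have h1 : ∑ g, (μ.toSet g).card = ∑ g, κ g := by
      rw [hsum, ← Finset.card_univ]
      have := Finset.card_eq_sum_card_fiberwise (f := μ.assign) (s := Finset.univ)
        (t := Finset.univ.image some) (fun d _ => by
          obtain ⟨g, hg⟩ := hall d
          simp [hg])
      rw [this, Finset.sum_image (fun a _ b _ hab => Option.some.inj hab)]
      rfl
    intro g
    exact (Finset.sum_eq_sum_iff_of_le (fun g _ => μ.card_le g)).1 h1 g (Finset.mem_univ g)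
  have hother : ∀ g x, ∃ y, y ≠ x ∧ μ.assign y = some g := by
    intro g x
    obtain ⟨y, hy, hyx⟩ := Finset.exists_mem_ne
      (show 1 < (μ.toSet g).card by rw [hfull]; exact hκ g) x
    exact ⟨y, hyx, mem_toSet.1 hy⟩
  have hmove : ∀ x g, x ≠ f → x ≠ m → μ.assign m = some g → w m < w x →
      ¬ u x (μ.assign x) < u x (some g) :=
    fun x g h1 h2 h3 h4 => hμ.not_move hdisj hu0 hall h1 h2 hmd h3 h4
  -- The couple blocks with `(h, h)` as soon as `h` is interested and does not employ both.
  have htopc : ∀ t, t ∈ T ∨ t = m → ∀ a, a ≠ some h → u t a < u t (some h) := by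
    rintro t ht (_ | a) ha
    · exact hu0 _ _
    · exact htop t ht a (fun h => ha (by rw [h]))
  have hblockh : μ.assign f ≠ some h → ¬ hospInterested (fun _ => setPref w) μ h {f, m} := by
    intro h1 h2
    refine hμ.2 i h h (blocksCouple_same (coupleVal_top (htopc f (Or.inl hfT)) ?_ h1) h2)
    intro a
    by_cases ha : a = some h
    · rw [ha]
    · exact (htopc m (Or.inr rfl) a ha).le
  have hblock : ∀ g, μ.assign f ≠ μ.assign m →
      ¬ hospInterested (fun _ => setPref w) μ g {f, m} := by
    intro g h1 h2
    exact hμ.2 i g g (blocksCouple_same (coupleVal_together rfl _ _ g h1) h2)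
  -- `m` is not employed at `h`: some member of `T` would replace `m`, or `f` would replace `d0`.
  have hmh : μ.assign m ≠ some h := by
    intro hmh
    obtain ⟨t, htT, hth⟩ : ∃ t ∈ T, μ.assign t ≠ some h := by
      by_contra! hcon
      have hsub : insert m T ⊆ μ.toSet h := by
        intro a ha
        rw [mem_toSet]
        rcases Finset.mem_insert.1 ha with rfl | ha
        · exact hmh
        · exact hcon a ha
      have := Finset.card_le_card hsub
      rw [Finset.card_insert_of_notMem hmT, hfull, hT] at this
      omega
    have hT' : ∀ t ∈ T, t ≠ f → μ.assign t = some h := by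
      intro t ht htf
      by_contra hth
      exact hmove t h htf (fun h => hmT (h ▸ ht)) hmh (hTm t ht) (htopc t (Or.inl ht) _ hth)
    have hfh : μ.assign f ≠ some h := by
      by_cases htf : t = f
      · rwa [← htf]
      · exact absurd (hT' t htT htf) hth
    have hd0ne : d0 ≠ f := fun h => by rw [h] at hd0f; exact lt_irrefl _ hd0f
    refine hblockh hfh (interested_replace hfh (hT' d0 hd0 hd0ne) hd0f (by simp) ?_)
    intro p hp
    simp only [Finset.mem_insert, Finset.mem_singleton] at hp
    rcases hp with rfl | rfl
    · exact Or.inl rfl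
    · exact Or.inr ⟨fun h => hmT (h ▸ hd0), hmh⟩
  obtain ⟨g, hg⟩ := hall m
  have hgh : g ≠ h := fun h => hmh (h ▸ hg)
  -- Every doctor employed at `h` belongs to `T`.
  have hhT : ∀ x, μ.assign x = some h → x ∈ T := by
    intro x hx
    by_contra hxT
    have hxm : x ≠ m := fun h => hmh (h ▸ hx)
    have hxf : x ≠ f := fun h => hxT (h ▸ hfT)
    rcases lt_or_gt_of_ne (hwinj.ne hxm) with hlt | hgt
    · by_cases hfh : μ.assign f = some h
      · refine hblock h (by rw [hfh]; exact hmh.symm)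
          (interested_replace hmh hx hlt (by simp) ?_)
        intro p hp
        simp only [Finset.mem_insert, Finset.mem_singleton] at hp
        rcases hp with rfl | rfl
        · exact Or.inr ⟨hxf.symm, hfh⟩
        · exact Or.inl rfl
      · obtain ⟨y, hyx, hy⟩ := hother h x
        exact hblockh hfh (interested_replace_two hfh hmh hfm hx hy hyx.symm
          (hw2 x y hlt))
    · refine hmove x g hxf hxm hg hgt ?_
      rw [hx]
      exact hlast x hxT hxm g hgh
  have hTeq : μ.toSet h = T :=
    Finset.eq_of_subset_of_card_le (fun x hx => hhT x (mem_toSet.1 hx)) (by rw [hT, hfull])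
  have hTh : ∀ t ∈ T, μ.assign t = some h := fun t ht => mem_toSet.1 (hTeq ▸ ht)
  have hfh := hTh f hfT
  have hfne : ∀ g, g ≠ h → μ.assign f ≠ some g := fun g hg h' =>
    hg (Option.some.inj (h'.symm.trans hfh))
  have hfmne : μ.assign f ≠ μ.assign m := by
    rw [hg]
    exact hfne g hgh
  -- `f` cannot join `m` in replacement of a colleague of `m`.
  have hcolleague : ∀ e, e ≠ m → w e < w f → μ.assign e ≠ some g := by
    intro e hem hef heg
    refine hblock g hfmne (interested_replace (hfne g hgh) heg hef (by simp) ?_)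
    intro p hp
    simp only [Finset.mem_insert, Finset.mem_singleton] at hp
    rcases hp with rfl | rfl
    · exact Or.inl rfl
    · exact Or.inr ⟨hem.symm, hg⟩
  rcases hfinal with ⟨e, he⟩ | ⟨hlow, h', d2, hh', hd2T, hd2f, hd2m, hd2top, hV⟩
  · have hem : e ≠ m := fun h => by rw [h] at he; exact lt_irrefl _ he
    obtain ⟨g2, hg2⟩ := hall e
    have hg2h : g2 ≠ h := by
      rintro rfl
      exact lt_asymm he (hTm e (hhT e hg2))
    have hgg : g2 ≠ g := by
      rintro rfl
      exact hcolleague e hem (he.trans hwfm) hg2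
    obtain ⟨y, hye, hy⟩ := hother g2 e
    refine hblock g2 hfmne (interested_replace_two (hfne g2 hg2h) ?_ hfm hg2 hy hye.symm
      (hw2 e y he))
    rw [hg]
    exact fun h => hgg (Option.some.inj h).symm
  · by_cases hgh' : g = h'
    · subst hgh'
      refine hmove d2 g (fun h => hd2T (h ▸ hfT)) hd2m hg (hlow d2 hd2m) ?_
      obtain ⟨a, ha⟩ := hall d2
      rw [ha]
      refine hd2top a ?_
      rintro rfl
      exact hcolleague d2 hd2m hd2f ha
    · obtain ⟨v, hvd, hv⟩ := hother h' d2
      have hvm : v ≠ m := by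
        rintro rfl
        exact hgh' (Option.some.inj (hg.symm.trans hv))
      have hvT : v ∉ T := fun hvT => hh' (Option.some.inj (hv.symm.trans (hTh v hvT)))
      refine hmove v g (fun h => hvT (h ▸ hfT)) hvm hg (hlow v hvm) ?_
      rw [hv]
      exact hV v hvT hvm hvd g hgh' hgh

end Core

/-! ### The weights and the doctors' utilities -/

/-- Weights representing the ranking `P0`, with distinct subset sums, such that two doctors ranked
at least as high as `m` outweigh any pair containing a doctor ranked below `m`. -/
lemma exists_weights {D : Type*} [Fintype D] {P0 : Option D → Option D → Prop}
    (hP0 : IsHospIndivPref P0) {f m : D} (hfm : P0 (some f) (some m)) :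
    ∃ w : D → ℕ, (∀ d, 0 < w d) ∧ (∀ a b, w b < w a ↔ P0 (some a) (some b)) ∧
      (∀ A B : Finset D, ∑ d ∈ A, w d = ∑ d ∈ B, w d → A = B) ∧
      ∀ x y, w x < w m → w x + w y < w f + w m := by
  classical
  obtain ⟨⟨hirr, htr, htot⟩, -⟩ := hP0
  let r : D → ℕ := fun d => (Finset.univ.filter fun x => P0 (some d) (some x)).card
  have hr1 : ∀ a b, P0 (some a) (some b) → r b < r a := by
    intro a b hab
    refine Finset.card_lt_card (Finset.ssubset_iff_of_subset ?_ |>.2 ⟨b, ?_, ?_⟩)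
    · intro x hx
      simp only [Finset.mem_filter, Finset.mem_univ, true_and] at *
      exact htr _ _ _ hab hx
    · simpa using hab
    · simpa using hirr _
  have hr2 : ∀ a b, r b < r a → P0 (some a) (some b) := by
    intro a b hab
    rcases eq_or_ne a b with rfl | hne
    · exact absurd hab (lt_irrefl _)
    · rcases htot (some a) (some b) (by simpa using hne) with h | h
      · exact h
      · exact absurd (hr1 _ _ h) hab.not_gt
  have hrinj : Function.Injective r := by
    intro a b hab
    by_contra hne
    rcases htot (some a) (some b) (by simpa using hne) with h | h
    · exact absurd (hr1 _ _ h) hab.not_gt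
    · exact absurd (hr1 _ _ h) hab.not_lt
  set N := Fintype.card D with hN
  have hrN : ∀ d, r d < N := by
    intro d
    refine Finset.card_lt_univ_of_notMem (x := d) ?_
    simpa using hirr _
  have hpowlt : ∀ d, 2 ^ r d < 2 ^ N := fun d => Nat.pow_lt_pow_right (by norm_num) (hrN d)
  have hpowpos : ∀ d, 0 < 2 ^ r d := fun d => by positivity
  have hpow : ∀ a b, 2 ^ r b < 2 ^ r a ↔ r b < r a :=
    fun a b => Nat.pow_lt_pow_iff_right (by norm_num)
  let w : D → ℕ := fun d => 2 ^ N * (if r m ≤ r d then 2 else 0) + 2 ^ r d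
  have hsum : ∀ A : Finset D, ∑ d ∈ A, w d =
      2 ^ N * (∑ d ∈ A, if r m ≤ r d then 2 else 0) + ∑ j ∈ A.image r, 2 ^ j := by
    intro A
    rw [Finset.sum_image (fun a _ b _ h => hrinj h), Finset.mul_sum, ← Finset.sum_add_distrib]
  have hlt : ∀ A : Finset D, ∑ j ∈ A.image r, 2 ^ j < 2 ^ N := by
    intro A
    refine Nat.geomSum_lt le_rfl ?_
    intro j hj
    obtain ⟨d, -, rfl⟩ := Finset.mem_image.1 hj
    exact hrN d
  have hwr : ∀ a b, w b < w a ↔ r b < r a := by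
    intro a b
    have := hpow a b
    have := hpowlt a
    have := hpowlt b
    have := hpowpos a
    simp only [w]
    split_ifs <;> omega
  refine ⟨w, fun d => ?_, fun a b => ?_, fun A B hAB => ?_, fun x y hx => ?_⟩
  · have := hpowpos d
    simp only [w]
    omega
  · exact (hwr a b).trans ⟨hr2 a b, hr1 a b⟩
  · rw [hsum, hsum] at hAB
    -- Modulo `2 ^ N` only the binary expansions remain.
    have h1 := congrArg (· % 2 ^ N) hAB
    simp only [Nat.mul_add_mod, Nat.mod_eq_of_lt (hlt _)] at h1
    exact Finset.image_injective hrinj (Finset.geomSum_injective le_rfl h1)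
  · have h1 := (hwr m x).1 hx
    have h2 := hr1 f m hfm
    have := hpowlt x
    have := hpowlt y
    have := hpowpos f
    have := hpowpos m
    simp only [w]
    rw [if_neg (by omega), if_pos h2.le, if_pos le_rfl]
    split_ifs <;> omega

/-- Doctors' utilities: the doctors satisfying `top` like `h` best, the others like `h` least;
among the latter, those satisfying `fav` like `h'` best, the others like only `h` less than `h'`. -/
lemma exists_utility {H D : Type*} [Fintype H] (h h' : H) (top fav : D → Prop) :
    ∃ u : D → Option H → ℕ, (∀ d, Function.Injective (u d)) ∧
      (∀ d g, u d none < u d (some g)) ∧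
      (∀ d, top d → ∀ g, g ≠ h → u d (some g) < u d (some h)) ∧
      (∀ d, ¬ top d → ∀ g, g ≠ h → u d (some h) < u d (some g)) ∧
      (h' ≠ h → ∀ d, ¬ top d → fav d → ∀ g, g ≠ h' → u d (some g) < u d (some h')) ∧
      ∀ d, ¬ top d → ¬ fav d → ∀ g, g ≠ h' → g ≠ h → u d (some h') < u d (some g) := by
  classical
  let e := Fintype.equivFin H
  let v : D → H → ℕ := fun d g =>
    if top d then (if g = h then Fintype.card H + 1 else e g + 1)
    else if g = h then 1
    else if g = h' then (if fav d then Fintype.card H + 3 else 2)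
    else e g + 3
  have he : ∀ a b, a ≠ b → (e a : ℕ) ≠ e b := fun a b hab h =>
    hab (e.injective (Fin.ext h))
  have hlt : ∀ a, (e a : ℕ) < Fintype.card H := fun a => (e a).2
  refine ⟨fun d a => a.elim 0 (v d), fun d => ?_, fun d g => ?_, fun d hd g hg => ?_,
    fun d hd g hg => ?_, fun hne d hd hf g hg => ?_, fun d hd hf g hg hgh => ?_⟩
  · rintro (_ | a) (_ | b) hab
    · rfl
    · exfalso
      simp only [Option.elim, v] at hab
      split_ifs at hab
    · exfalso
      simp only [Option.elim, v] at hab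
      split_ifs at hab
    · by_contra hne
      have hne' : a ≠ b := fun h => hne (by rw [h])
      have := he a b hne'
      have := hlt a
      have := hlt b
      simp only [Option.elim, v] at hab
      split_ifs at hab <;> first | omega | (subst_vars; exact hne' rfl)
  all_goals have := hlt g
  · simp only [Option.elim, v]
    split_ifs <;> omega
  all_goals simp only [Option.elim, v]; grind

/-- Theorem 3: if the hospitals' common individual ranking P⁰_hp does not satisfy SCPI,
then there exists an RVT extension of P⁰_hp (hospitals' preferences responsive with
respect to P⁰_hp, every couple's preference satisfying RVT) with no stable matching. -/
theorem stmt_3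
    {H D : Type*} [Fintype H] [Fintype D] [DecidableEq H] [DecidableEq D]
    (κ : H → ℕ) (k : ℕ) (fd md : Fin k → D)
    (hH : 2 ≤ Fintype.card H) (hD : 4 ≤ Fintype.card D) (hk : 1 ≤ k)
    (hκ : ∀ h, 2 ≤ κ h) (hsum : ∑ h, κ h = Fintype.card D)
    (hfd : Function.Injective fd) (hmd : Function.Injective md)
    (hdisj : ∀ i j, fd i ≠ md j)
    -- the common individual ranking P⁰_hp of the hospitals :
    (P0hp : Option D → Option D → Prop)
    (hP0 : IsHospIndivPref P0hp)
    (hidx1 : ∀ i, P0hp (some (fd i)) (some (md i)))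
    (hidx2 : ∀ i j : Fin k, i < j → P0hp (some (md i)) (some (md j)))
    (hnSCPI : ¬ SCPI κ fd md P0hp) :
    -- there is an RVT extension of P⁰_hp with no stable matching :
    ∃ (Pd : D → Option H → Option H → Prop)
      (Pc : Fin k → Option H × Option H → Option H × Option H → Prop)
      (Ph : H → Finset D → Finset D → Prop),
      (∀ d, IsDoctorPref (Pd d)) ∧
      (∀ i, IsCouplePref (Pc i)) ∧
      (∀ i, RVT (Pd (fd i)) (Pd (md i)) (Pc i)) ∧
      (∀ h, IsFeasiblePref (κ h) (Ph h)) ∧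
      (∀ h, Responsive (κ h) (Ph h) P0hp) ∧
      ∀ μ : Matching H D κ, ¬ Stable fd md Pd Pc Ph μ := by
  classical
  obtain ⟨⟨hirr, htr, htot⟩, -⟩ := id hP0
  simp only [SCPI, not_forall] at hnSCPI
  obtain ⟨i, hi⟩ := hnSCPI
  obtain ⟨w, hpos, hw, hwsum, hw2⟩ := exists_weights hP0 (hidx1 i)
  have hwinj : Function.Injective w := fun a b hab =>
    Finset.singleton_injective (hwsum {a} {b} (by simpa using hab))
  simp only [← hw] at hi
  have hwfm : w (md i) < w (fd i) := (hw _ _).2 (hidx1 i)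
  -- The choices left to make are a hospital `h`, the doctors `T` who fill it, and, when `md i` is
  -- the lowest-ranked doctor, another hospital `h'` with a doctor `d2` who likes it best.
  suffices key : ∃ (h h' : H) (T : Finset D) (d0 d2 : D), h' ≠ h ∧ T.card = κ h ∧
      (∀ t ∈ T, w (md i) < w t) ∧ fd i ∈ T ∧ d0 ∈ T ∧ w d0 < w (fd i) ∧
      ((∃ e, w e < w (md i)) ∨ ((∀ x, x ≠ md i → w (md i) < w x) ∧
        d2 ∉ T ∧ w d2 < w (fd i) ∧ d2 ≠ md i)) by
    obtain ⟨h, h', T, d0, d2, hne, hT, hTm, hfT, hd0, hd0f, hfinal⟩ := key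
    obtain ⟨u, hu, hu0, htop, hlast, hfav, hnfav⟩ :=
      exists_utility h h' (fun d => d ∈ T ∨ d = md i) (fun d => d = d2)
    refine ⟨fun d => utilPref (u d),
      fun j => utilPref (coupleVal (j = i) (u (fd j)) (u (md j))), fun _ => setPref w,
      fun d => ⟨isStrictPref_utilPref (hu d), hu0 d⟩,
      fun j => isCouplePref_coupleVal _ (hu _) (hu _),
      fun j => rvt_coupleVal _ (hu _) (hu _) (hu0 _) (hu0 _),
      fun h => isFeasiblePref_setPref _ hwsum,
      fun h => responsive_setPref _ hP0 hpos hw, fun μ => ?_⟩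
    refine not_stable_core hdisj hmd hκ hsum hu hu0 hpos hwfm hw2 hwinj hT hTm hfT hd0 hd0f htop
      (fun x h1 h2 => hlast x (by tauto)) ?_
    rcases hfinal with h1 | ⟨h1, h2, h3, h4⟩
    · exact Or.inl h1
    · exact Or.inr ⟨h1, h', d2, hne, h2, h3, h4, hfav hne d2 (by tauto) rfl,
        fun x hx1 hx2 hx3 => hnfav x (by tauto) hx3⟩
  have hcardH : 1 < Fintype.card H := hH
  rw [not_and_or] at hi
  rcases hi with hi | hi
  · simp only [Classical.not_imp, not_or, not_forall, not_lt] at hi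
    obtain ⟨⟨e, -, he⟩, hbet, h, hh⟩ := hi
    obtain ⟨d0, hd0⟩ := Set.nonempty_of_ncard_ne_zero hbet
    obtain ⟨h', hne⟩ := Fintype.exists_ne_of_one_lt_card hcardH h
    have hd0f : fd i ≠ d0 := by
      rintro h
      have := hd0.1
      rw [← h] at this
      exact lt_irrefl _ this
    obtain ⟨T, hT1, hT2, hT3⟩ := Finset.exists_subsuperset_card_eq
      (s := {fd i, d0}) (t := Finset.univ.filter fun d => w (md i) < w d) (n := κ h)
      (by
        intro x hx
        simp only [Finset.mem_insert, Finset.mem_singleton] at hx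
        rcases hx with rfl | rfl
        · simpa using hwfm
        · simpa using hd0.2)
      (by rw [Finset.card_pair hd0f]; exact hκ h)
      (by
        rw [Set.ncard_eq_toFinset_card'] at hh
        simpa using hh)
    exact ⟨h, h', T, d0, d0, hne, hT3, fun t ht => by simpa using hT2 ht, hT1 (by simp),
      hT1 (by simp), hd0.1, Or.inl ⟨e, he⟩⟩
  · simp only [Classical.not_imp, not_le] at hi
    obtain ⟨hlow, hbet⟩ := hi
    obtain ⟨d0, d2, hd0, hd2, hd⟩ := (Set.one_lt_ncard_iff (Set.toFinite _)).1 hbet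
    obtain ⟨h, h', hne⟩ := Fintype.one_lt_card_iff.1 hcardH
    have hne0 : fd i ≠ d0 := by
      rintro h
      have := hd0.1
      rw [← h] at this
      exact lt_irrefl _ this
    have hne2 : fd i ≠ d2 := by
      rintro h
      have := hd2.1
      rw [← h] at this
      exact lt_irrefl _ this
    have hm0 : d0 ≠ md i := by
      rintro h
      have := hd0.2
      rw [h] at this
      exact lt_irrefl _ this
    have hm2 : d2 ≠ md i := by
      rintro h
      have := hd2.2
      rw [h] at this
      exact lt_irrefl _ this
    -- There is room for `T`, as the other hospitals offer at least two further seats.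
    have hcap : κ h + κ h' ≤ Fintype.card D := by
      rw [← hsum, ← Finset.sum_pair hne]
      exact Finset.sum_le_sum_of_subset (Finset.subset_univ _)
    have := hκ h'
    obtain ⟨T, hT1, hT2, hT3⟩ := Finset.exists_subsuperset_card_eq
      (s := {fd i, d0}) (t := (Finset.univ.erase (md i)).erase d2) (n := κ h)
      (by
        intro x hx
        simp only [Finset.mem_insert, Finset.mem_singleton] at hx
        rcases hx with rfl | rfl
        · simp [hne2, hdisj]
        · simp [hd, hm0])
      (by rw [Finset.card_pair hne0]; exact hκ h)
      (by
        rw [Finset.card_erase_of_mem (by simp [hm2]), Finset.card_erase_of_mem (by simp),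
          Finset.card_univ]
        omega)
    refine ⟨h, h', T, d0, d2, hne.symm, hT3, fun t ht => ?_, hT1 (by simp), hT1 (by simp), hd0.1,
      Or.inr ⟨hlow, fun h => by simpa using hT2 h, hd2.1, hm2⟩⟩
    have := hT2 ht
    simp only [Finset.mem_erase] at this
    exact hlow t this.2.1

end CouplesMarket
end

section
/- Suppose there are exactly two hospitals, |H| = 2. Then a collection P⁰_C of preferences of non-single doctors and couples (each couple's preference satisfying RVT) satisfies the SRF property if and only if it satisfies the RF property. -/
/-!
Only the extra clause of SRF has to be derived. If `h` is not top-ranked by `f`, some `h''` is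
preferred to `h` by `f`; and the clause concerns an `h'` that `m` prefers to `h`. Both differ from
`h` by irreflexivity, so with two hospitals they coincide, and `f` prefers `h' = h''` to `h`.
-/

namespace CouplesMarket

/-- Lemma 1: when there are exactly two hospitals, a collection P⁰_C of preferences of
non-single doctors and couples (each couple's preference satisfying RVT) satisfies the
SRF property if and only if it satisfies the RF property. -/
theorem stmt_5
    {H D : Type*} [Fintype H] [Fintype D] [DecidableEq H] [DecidableEq D]
    (κ : H → ℕ) (k : ℕ) (fd md : Fin k → D)
    (hH : Fintype.card H = 2) (hD : 4 ≤ Fintype.card D) (hk : 1 ≤ k)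
    (hκ : ∀ h, 2 ≤ κ h) (hsum : ∑ h, κ h = Fintype.card D)
    (hfd : Function.Injective fd) (hmd : Function.Injective md)
    (hdisj : ∀ i j, fd i ≠ md j)
    -- the collection P⁰_C :
    (Pf Pm : Fin k → Option H → Option H → Prop)
    (Pc : Fin k → Option H × Option H → Option H × Option H → Prop)
    (hPf : ∀ i, IsDoctorPref (Pf i)) (hPm : ∀ i, IsDoctorPref (Pm i))
    (hPc : ∀ i, IsCouplePref (Pc i))
    (hRVT : ∀ i, RVT (Pf i) (Pm i) (Pc i)) :
    SRF Pf Pm Pc ↔ RF Pf Pc := by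
  refine ⟨fun hS => hS.1, fun hRF => ⟨hRF, ?_⟩⟩
  rintro i h h' ⟨h'', hf⟩ - hm
  have hne'' : h'' ≠ h := by
    rintro rfl
    exact (hPf i).1.1 _ hf
  have hne' : h' ≠ h := by
    rintro rfl
    exact (hPm i).1.1 _ hm
  -- With only two hospitals, the complement of `h` has at most one element.
  have heq : h' = h'' := by
    by_contra hne
    have hcard : ({h, h', h''} : Finset H).card = 3 :=
      Finset.card_eq_three.2 ⟨h, h', h'', hne'.symm, hne''.symm, hne, rfl⟩
    have hle := Finset.card_le_univ ({h, h', h''} : Finset H)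
    omega
  exact heq ▸ hf

end CouplesMarket
end

section
/- Consider the matching market with hospitals H = {h_1,h_2}, each of capacity 2, and doctors D = {s_1,s_2,f,m} where {f,m} is the unique couple and s_1,s_2 are single. Suppose both hospitals rank individual doctors by the common order f > s_1 > s_2 > m > ∅; the single doctors' preferences are s_1: h_2 > h_1 > ∅ and s_2: h_1 > h_2 > ∅; the couple's members have individual preferences f: h_2 > h_1 > ∅ and m: h_1 > h_2 > ∅; and the couple's preference ranks (h_1,h_1) > (h_2,h_1) > (h_2,h_2) > (h_1,h_2), with every pair having a component equal to ∅ ranked below all four. Then for every choice of the two hospitals' preferences over feasible sets of doctors that are responsive with respect to the common order f > s_1 > s_2 > m > ∅, no stable matching exists. -/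
/-!
In a matching without blocking pairs all four doctors are employed: a vacancy attracts any
unmatched single doctor, and the couple prefers every pair of hospitals to a pair with an unmatched
component. The seats being just enough, six matchings remain, and each is blocked. Writing
`(a, b)` for the hospitals of `(f, m)`:

* `(h₁, h₁)` is blocked by `h₁` and `s₂`, who replaces `m`;
* `(h₂, h₁)` with `s₂` at `h₁` is blocked by the couple at `(h₁, h₁)`, `f` replacing `s₂`;
* `(h₂, h₁)` with `s₂` at `h₂` is blocked by `h₂` and `s₁`, who replaces `s₂`;
* `(h₂, h₂)` is blocked by `h₂` and `s₁`, who replaces `m`;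
* `(h₁, h₂)` is blocked by the couple at `(h₂, h₂)`, `f` replacing the single doctor at `h₂`.

Responsiveness determines all the comparisons of sets used here, since each of them is an addition
of one doctor or a substitution of one doctor for another (`prefers_of_swap`). The comparison of
`{f, m}` with `{s₁, s₂}`, which responsiveness leaves open, never occurs. Hence hospital interest
can be replaced by a decidable sufficient condition depending only on the assignment (`Welcome`,
`CoupleWelcome`), and the existence of a block for every assignment (`exists_block`) is a finite
check.
-/

namespace CouplesMarket

/-- Strict preference induced by a rank function (smaller rank = better). -/
def prefOfRank {α : Type*} (r : α → ℕ) : α → α → Prop := fun x y => r x < r y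

/-- Example 1: hospitals `H = {h₁, h₂} = Fin 2`, doctors `D = {s₁, s₂, f, m} = Fin 4`
(with `s₁ = 0`, `s₂ = 1`, `f = 2`, `m = 3`), the unique couple being `{f, m}`.
The common ranking of the hospitals over individual doctors is `f > s₁ > s₂ > m > ∅`. -/
def P0hp9 : Option (Fin 4) → Option (Fin 4) → Prop :=
  prefOfRank (fun x => x.elim 4 ![1, 2, 0, 3])

/-- The individual preferences of the doctors in Example 1:
`s₁ : h₂ > h₁ > ∅`, `s₂ : h₁ > h₂ > ∅`, `f : h₂ > h₁ > ∅`, `m : h₁ > h₂ > ∅`. -/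
def Pd9 : Fin 4 → Option (Fin 2) → Option (Fin 2) → Prop :=
  fun d => prefOfRank (fun x => x.elim 2 (![![1, 0], ![0, 1], ![1, 0], ![0, 1]] d))

instance : DecidableRel P0hp9 := fun x y =>
  inferInstanceAs (Decidable (x.elim 4 ![1, 2, 0, 3] < y.elim 4 ![1, 2, 0, 3]))

instance (d : Fin 4) : DecidableRel (Pd9 d) := fun x y =>
  inferInstanceAs (Decidable (x.elim 2 (![![1, 0], ![0, 1], ![1, 0], ![0, 1]] d) <
    y.elim 2 (![![1, 0], ![0, 1], ![1, 0], ![0, 1]] d)))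

/-- The doctors that the assignment `a` places at hospital `h`. -/
def staff (a : Fin 4 → Option (Fin 2)) (h : Fin 2) : Finset (Fin 4) :=
  Finset.univ.filter (fun d => a d = some h)

/-- Under the assignment `a`, doctor `d` is not at `h`, and `h` has a vacancy or employs somebody
it ranks below `d`. -/
abbrev Welcome (a : Fin 4 → Option (Fin 2)) (h : Fin 2) (d : Fin 4) : Prop :=
  d ∉ staff a h ∧ ((staff a h).card < 2 ∨ ∃ x ∈ staff a h, P0hp9 (some d) (some x))

/-- A sufficient condition for the hospitals `hf, hm` to take part in a block with the couple
`(f, m) = (2, 3)`. When `hf = hm` only the case where `m` is already there and `f` is not is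
covered, so that a single substitution suffices. -/
abbrev CoupleWelcome (a : Fin 4 → Option (Fin 2)) (hf hm : Fin 2) : Prop :=
  if hf = hm then 3 ∈ staff a hf ∧ 2 ∉ staff a hf
  else (2 ∈ staff a hf ∨ Welcome a hf 2) ∧ (3 ∈ staff a hm ∨ Welcome a hm 3)

/-- The couple's ranking of pairs of hospitals; all pairs with an unmatched component share the
last value, as their relative order is unspecified. -/
def coupleRank : Option (Fin 2) × Option (Fin 2) → ℕ
  | (some hf, some hm) => ![![0, 3], ![1, 2]] hf hm
  | _ => 4

theorem exists_block : ∀ a : Fin 4 → Option (Fin 2), (∀ h, (staff a h).card ≤ 2) →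
    (∃ h s, s ≠ 2 ∧ s ≠ 3 ∧ Pd9 s (some h) (a s) ∧ Welcome a h s) ∨
    (∃ hf hm, coupleRank (some hf, some hm) < coupleRank (a 2, a 3) ∧
      CoupleWelcome a hf hm) := by
  decide +kernel

/-- Holding at most one colleague `E` fixed, a responsive hospital prefers adding `d` to adding
a worse doctor, or nobody (`o = none`). -/
theorem prefers_of_swap {P : Finset (Fin 4) → Finset (Fin 4) → Prop}
    (hP : Responsive 2 P P0hp9) {E : Finset (Fin 4)} {d : Fin 4} {o : Option (Fin 4)}
    (hE : E.card ≤ 1) (hd : d ∉ E) (ho : Disjoint (optSet o) E) (hlt : P0hp9 (some d) o) :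
    P (E ∪ {d}) (E ∪ optSet o) := by
  have hEd : (E ∪ {d}).card ≤ 2 := (Finset.card_union_le _ _).trans (by simpa using hE)
  have hEo : (E ∪ optSet o).card ≤ 2 := by
    refine (Finset.card_union_le _ _).trans ?_
    cases o <;> simp [optSet] <;> omega
  refine (hP.2 E {d} (optSet o) ?_ (by simpa using hd) ho hEd hEo).2 ((hP.1 (some d) o).2 hlt)
  rintro rfl
  exact hd (Finset.mem_univ d)

section Interest

variable {Ph : Fin 2 → Finset (Fin 4) → Finset (Fin 4) → Prop}
  {μ : Matching (Fin 2) (Fin 4) (fun _ => 2)}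

theorem interested_of_welcome (hresp : ∀ h, Responsive 2 (Ph h) P0hp9) {h : Fin 2} {d : Fin 4}
    (hw : Welcome μ.assign h d) : hospInterested Ph μ h {d} := by
  obtain ⟨hd, hcard | ⟨x, hx, hlt⟩⟩ := hw
  · change d ∉ μ.toSet h at hd
    change (μ.toSet h).card < 2 at hcard
    refine ⟨∅, Finset.empty_subset _, ?_, ?_⟩
    · rw [Finset.sdiff_empty]
      exact (Finset.card_union_le _ _).trans (by simpa using Nat.le_of_lt_succ hcard)
    · have := prefers_of_swap (hresp h) (o := none) (Nat.le_of_lt_succ hcard) hd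
        (by simp [optSet]) ((by decide : ∀ d, P0hp9 (some d) none) d)
      simpa [optSet] using this
  · change d ∉ μ.toSet h at hd
    change x ∈ μ.toSet h at hx
    have hcap : (μ.toSet h).card ≤ 2 := μ.card_le h
    have hE : (μ.toSet h \ {x}).card ≤ 1 := by
      rw [Finset.sdiff_singleton_eq_erase, Finset.card_erase_of_mem hx]; omega
    refine ⟨{x}, by simpa using hx, ?_, ?_⟩
    · exact (Finset.card_union_le _ _).trans (by simpa using hE)
    · have := prefers_of_swap (hresp h) (o := some x) hE (by simp [hd]) (by simp [optSet]) hlt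
      rwa [show (μ.toSet h \ {x}) ∪ optSet (some x) = μ.toSet h from
        Finset.sdiff_union_of_subset (by simpa using hx)] at this

/-- A hospital employing `m` but not `f` would take both: `f` fills the vacancy or replaces the
colleague of `m`. -/
theorem interested_couple (hresp : ∀ h, Responsive 2 (Ph h) P0hp9) {h : Fin 2}
    (hm : 3 ∈ staff μ.assign h) (hf : 2 ∉ staff μ.assign h) :
    hospInterested Ph μ h {2, 3} := by
  change 3 ∈ μ.toSet h at hm
  change 2 ∉ μ.toSet h at hf
  have hcap : (μ.toSet h).card ≤ 2 := μ.card_le h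
  have hset : ({3} : Finset (Fin 4)) ∪ (μ.toSet h \ {3}) = μ.toSet h :=
    Finset.union_sdiff_of_subset (by simpa using hm)
  -- The seat other than that of `m` is vacant (`o = none`) or held by some doctor.
  obtain ⟨o, ho⟩ : ∃ o, optSet o = μ.toSet h \ {3} := by
    have hE : (μ.toSet h \ {3}).card ≤ 1 := by
      rw [Finset.sdiff_singleton_eq_erase, Finset.card_erase_of_mem hm]; omega
    rcases Nat.le_one_iff_eq_zero_or_eq_one.1 hE with h0 | h1
    · exact ⟨none, (Finset.card_eq_zero.1 h0).symm⟩
    · obtain ⟨x, hx⟩ := Finset.card_eq_one.1 h1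
      exact ⟨some x, hx.symm⟩
  have ho2 : o ≠ some 2 := by
    rintro rfl
    have : (2 : Fin 4) ∈ μ.toSet h \ {3} := ho ▸ Finset.mem_singleton_self 2
    exact hf (Finset.mem_sdiff.1 this).1
  have hlt : P0hp9 (some 2) o :=
    (by decide : ∀ o, o ≠ some 2 → P0hp9 (some 2) o) o ho2
  have key := prefers_of_swap (hresp h) (E := {3}) (d := 2) (o := o) (by simp) (by decide)
    (by rw [ho]; exact Finset.sdiff_disjoint) hlt
  rw [ho, hset] at key
  have hfm : (μ.toSet h \ (μ.toSet h \ {3})) ∪ {2, 3} = ({3} : Finset (Fin 4)) ∪ {2} := by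
    rw [Finset.sdiff_sdiff_eq_self (by simpa using hm)]
    decide
  refine ⟨μ.toSet h \ {3}, Finset.sdiff_subset, ?_, ?_⟩
  · rw [hfm]; exact (by decide : ({3} ∪ {2} : Finset (Fin 4)).card ≤ 2)
  · rwa [hfm]

end Interest

/-- In the market of Example 1, where the couple's preference ranks
`(h₁,h₁) > (h₂,h₁) > (h₂,h₂) > (h₁,h₂)` and ranks every pair with an unmatched component
below all pairs of hospitals, no choice of responsive hospital preferences over feasible
sets (with respect to the common ranking `f > s₁ > s₂ > m > ∅`) admits a stable matching. -/
theorem stmt_9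
    (Pc : Option (Fin 2) × Option (Fin 2) → Option (Fin 2) × Option (Fin 2) → Prop)
    (Ph : Fin 2 → Finset (Fin 4) → Finset (Fin 4) → Prop)
    (hPc : IsCouplePref Pc)
    (hc1 : Pc (some 0, some 0) (some 1, some 0))
    (hc2 : Pc (some 1, some 0) (some 1, some 1))
    (hc3 : Pc (some 1, some 1) (some 0, some 1))
    (hPh : ∀ h, IsFeasiblePref 2 (Ph h))
    (hresp : ∀ h, Responsive 2 (Ph h) P0hp9) :
    ∀ μ : Matching (Fin 2) (Fin 4) (fun _ => 2),
      ¬ Stable (k := 1) ![2] ![3] Pd9 (fun _ => Pc) Ph μ := by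
  have htr := hPc.1.2.1
  have hpref : ∀ hf hm q, coupleRank (some hf, some hm) < coupleRank q →
      Pc (some hf, some hm) q := by
    rintro hf hm ⟨_ | a, _ | b⟩ hlt
    · exact hPc.2 _ _ _ (Or.inl rfl)
    · exact hPc.2 _ _ _ (Or.inl rfl)
    · exact hPc.2 _ _ _ (Or.inr rfl)
    · have h02 := htr _ _ _ hc1 hc2
      have h13 := htr _ _ _ hc2 hc3
      have h03 := htr _ _ _ hc1 h13
      fin_cases hf <;> fin_cases hm <;> fin_cases a <;> fin_cases b <;>
        first
        | exact absurd hlt (by decide)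
        | assumption
  rintro μ ⟨hS, hC⟩
  rcases exists_block μ.assign μ.card_le with ⟨h, s, hs2, hs3, hp, hw⟩ | ⟨hf, hm, hr, hw⟩
  · exact hS h s (fun i => by fin_cases i; exact ⟨hs2, hs3⟩)
      ⟨hp, interested_of_welcome hresp hw⟩
  · refine hC 0 hf hm ⟨hpref _ _ _ hr, ?_⟩
    have hmem : ∀ d h, d ∈ staff μ.assign h ↔ μ.assign d = some h := by simp [staff]
    by_cases heq : hf = hm
    · subst heq
      rw [CoupleWelcome, if_pos rfl] at hw
      obtain ⟨h3, h2⟩ := hw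
      exact ⟨fun h => absurd rfl h, fun h => absurd rfl h, fun h => absurd rfl h,
        fun _ => interested_couple hresp h3 h2⟩
    · rw [CoupleWelcome, if_neg heq] at hw
      have hf' : μ.assign 2 ≠ some hf → hospInterested Ph μ hf {2} := fun h =>
        interested_of_welcome hresp (hw.1.resolve_left (fun h' => h ((hmem _ _).1 h')))
      have hm' : μ.assign 3 ≠ some hm → hospInterested Ph μ hm {3} := fun h =>
        interested_of_welcome hresp (hw.2.resolve_left (fun h' => h ((hmem _ _).1 h')))
      exact ⟨fun _ h h' => ⟨hf' h, hm' h'⟩, fun _ _ h => hm' h, fun _ _ h => hf' h,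
        fun h => absurd h heq⟩

end CouplesMarket
end

section
/- Consider the matching market with hospitals H = {h_1,h_2,h_3}, each of capacity 2, and doctors D = {f,m,s_1,s_2,s_3,s_4} where {f,m} is the unique couple and s_1,…,s_4 are single. Suppose the hospitals rank individual doctors by: h_1: s_3 > s_4 > s_1 > f > m > s_2 > ∅; h_2: s_4 > s_3 > f > m > s_1 > s_2 > ∅; h_3: s_3 > s_4 > m > f > s_1 > s_2 > ∅. The single doctors' preferences are s_1: h_2 > h_1 > h_3 > ∅; s_2: h_3 > h_1 > h_2 > ∅; s_3: h_1 > h_2 > h_3 > ∅; s_4: h_2 > h_1 > h_3 > ∅; the couple's members have individual preferences f: h_1 > h_3 > h_2 > ∅ and m: h_2 > h_1 > h_3 > ∅; and the couple's preference ranks (h_1,h_2) > (h_1,h_1) > (h_1,h_3) > (h_3,h_3) > (h_3,h_2) > (h_3,h_1) > (h_2,h_2) > (h_2,h_1) > (h_2,h_3), with every pair having a component equal to ∅ ranked below all of these. Then for every choice of the hospitals' preferences over feasible sets of doctors that are responsive with respect to their respective individual rankings, no stable matching exists. -/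
/-!
Doctors `s₃` and `s₄` and hospitals `h₁` and `h₂` are mutual first choices, so a stable matching
puts `s₃` at `h₁` and `s₄` at `h₂`, leaving one seat in each. Behind these two, `h₁` likes `s₁`
best, so `s₁` is at `h₁` or, which she prefers, at `h₂`. The remaining doctors then chase each
other.

* If `f` has the free seat at `h₂`, then `s₁` is at `h₁`, and `m` is at `h₃` or unmatched. The
  couple moves, to `(h₃, h₃)` in the former case and to `(h₂, h₃)` in the latter.
* If `s₁` is at `h₁`, she covets `h₂`, whose free seat must belong to `f` (previous case) or `m`.
  If to `m`, then `f` is at `h₃` or unmatched, and the couple moves to `(h₃, h₃)` or `(h₃, h₂)`.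
* If `s₁` is at `h₂`, the couple moves to `(h₁, h₂)`, its first choice: `h₂` prefers `m` to `s₁`,
  and `h₁` has nobody but `s₃` whom it prefers to `f`.

Every hospital comparison involved replaces one doctor by a better one or fills an empty seat, so
it is dictated by responsiveness: `full_of_not_interested` for a single newcomer and
`interested_pair` for the arrival of the second member of the couple.
-/

namespace CouplesMarket

/-- Example 2: hospitals `H = {h₁, h₂, h₃} = Fin 3`, doctors
`D = {f, m, s₁, s₂, s₃, s₄} = Fin 6` (with `f = 0`, `m = 1`, `sᵢ = i + 1`), the unique
couple being `{f, m}`.  The hospitals' individual rankings are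
`h₁ : s₃ > s₄ > s₁ > f > m > s₂ > ∅`, `h₂ : s₄ > s₃ > f > m > s₁ > s₂ > ∅`,
`h₃ : s₃ > s₄ > m > f > s₁ > s₂ > ∅`. -/
def Pt10 : Fin 3 → Option (Fin 6) → Option (Fin 6) → Prop :=
  fun h => prefOfRank (fun x => x.elim 6
    (![![3, 4, 2, 5, 0, 1], ![2, 3, 4, 5, 1, 0], ![3, 2, 4, 5, 0, 1]] h))

/-- The individual preferences of the doctors in Example 2:
`f : h₁ > h₃ > h₂ > ∅`, `m : h₂ > h₁ > h₃ > ∅`, `s₁ : h₂ > h₁ > h₃ > ∅`,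
`s₂ : h₃ > h₁ > h₂ > ∅`, `s₃ : h₁ > h₂ > h₃ > ∅`, `s₄ : h₂ > h₁ > h₃ > ∅`. -/
def Pd10 : Fin 6 → Option (Fin 3) → Option (Fin 3) → Prop :=
  fun d => prefOfRank (fun x => x.elim 3
    (![![0, 2, 1], ![1, 0, 2], ![1, 0, 2], ![1, 2, 0], ![0, 1, 2], ![1, 0, 2]] d))

/-- The couple's ranking of the pairs of hospitals in Example 2:
`(h₁,h₂) > (h₁,h₁) > (h₁,h₃) > (h₃,h₃) > (h₃,h₂) > (h₃,h₁) > (h₂,h₂) > (h₂,h₁) > (h₂,h₃)`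
(rows indexed by `f`'s hospital, columns by `m`'s hospital). -/
def crank10 : Fin 3 → Fin 3 → ℕ := ![![1, 0, 2], ![7, 6, 8], ![5, 4, 3]]

/-! ### Consequences of responsiveness -/

section Responsive

variable {Ph : Fin 3 → Finset (Fin 6) → Finset (Fin 6) → Prop}
  {μ : Matching (Fin 3) (Fin 6) (fun _ => 2)}

/-- A hospital refusing a newcomer is full, with doctors it prefers to her: otherwise it would
fill its empty seat or dismiss a worse doctor. -/
lemma full_of_not_interested (hresp : ∀ h, Responsive 2 (Ph h) (Pt10 h)) {h : Fin 3} {d : Fin 6}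
    (hd : μ.assign d ≠ some h) (hn : ¬ hospInterested Ph μ h {d}) :
    ∃ a b, a ≠ b ∧ μ.assign a = some h ∧ μ.assign b = some h ∧
      Pt10 h (some a) (some d) ∧ Pt10 h (some b) (some d) := by
  have hmem : ∀ x, x ∈ μ.toSet h ↔ μ.assign x = some h := fun x => by simp [Matching.toSet]
  have hdn : d ∉ μ.toSet h := by rwa [hmem]
  have hne : μ.toSet h ≠ Finset.univ := fun e => hdn (e ▸ Finset.mem_univ d)
  have hc : (μ.toSet h).card ≤ 2 := μ.card_le h
  have hfull : (μ.toSet h).card = 2 := by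
    by_contra hlt
    have hcard : (μ.toSet h ∪ {d}).card ≤ 2 := by
      have := Finset.card_union_le (μ.toSet h) {d}
      rw [Finset.card_singleton] at this
      omega
    refine hn ⟨∅, Finset.empty_subset _, by simpa using hcard, ?_⟩
    have key := ((hresp h).2 (μ.toSet h) {d} ∅ hne (by simpa using hdn) (by simp) hcard
      (by simpa using hc)).2 (((hresp h).1 (some d) none).2 ?_)
    · simpa using key
    · unfold Pt10 prefOfRank
      clear * -
      decide +revert
  have hbetter : ∀ e ∈ μ.toSet h, Pt10 h (some e) (some d) := by
    intro e he
    by_contra hle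
    have hed : e ≠ d := fun x => hdn (x ▸ he)
    have hlt : Pt10 h (some d) (some e) := by
      clear hn hdn hne hc hfull hmem he hd
      unfold Pt10 prefOfRank at *
      decide +revert
    have hcard : (μ.toSet h \ {e} ∪ {d}).card ≤ 2 := by
      have h1 := Finset.card_union_le (μ.toSet h \ {e}) {d}
      have h2 := Finset.card_sdiff_add_card_eq_card (Finset.singleton_subset_iff.2 he)
      rw [Finset.card_singleton] at h1 h2
      omega
    have hback : μ.toSet h \ {e} ∪ {e} = μ.toSet h :=
      Finset.sdiff_union_of_subset (Finset.singleton_subset_iff.2 he)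
    refine hn ⟨{e}, Finset.singleton_subset_iff.2 he, hcard, ?_⟩
    have key := ((hresp h).2 (μ.toSet h \ {e}) {d} {e}
      (fun x => hdn (Finset.sdiff_subset (x ▸ Finset.mem_univ d))) (by simp [hdn]) (by simp)
      hcard (by rw [hback]; exact hc)).2 (((hresp h).1 (some d) (some e)).2 hlt)
    rwa [hback] at key
  obtain ⟨a, b, hab, hs⟩ := Finset.card_eq_two.1 hfull
  have ha : a ∈ μ.toSet h := by simp [hs]
  have hb : b ∈ μ.toSet h := by simp [hs]
  exact ⟨a, b, hab, (hmem a).1 ha, (hmem b).1 hb, hbetter a ha, hbetter b hb⟩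

/-- A hospital employing `a` welcomes the pair `{a, d}` if it prefers `d` to every other doctor
it employs. -/
lemma interested_pair (hresp : ∀ h, Responsive 2 (Ph h) (Pt10 h)) {h : Fin 3} {a d : Fin 6}
    (ha : μ.assign a = some h) (hd : μ.assign d ≠ some h)
    (hbest : ∀ e, e ≠ a → μ.assign e = some h → Pt10 h (some d) (some e)) :
    hospInterested Ph μ h {a, d} := by
  have hmem : ∀ x, x ∈ μ.toSet h ↔ μ.assign x = some h := fun x => by simp [Matching.toSet]
  have has : a ∈ μ.toSet h := (hmem a).2 ha
  have hc : (μ.toSet h).card ≤ 2 := μ.card_le h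
  have had : d ≠ a := fun x => hd (x ▸ ha)
  have hback : {a} ∪ μ.toSet h \ {a} = μ.toSet h :=
    Finset.union_sdiff_of_subset (Finset.singleton_subset_iff.2 has)
  have hnew : μ.toSet h \ (μ.toSet h \ {a}) ∪ {a, d} = {a} ∪ {d} := by
    ext x
    by_cases hx : x = a <;> simp [hx]
  have hcard : (({a} : Finset (Fin 6)) ∪ {d}).card ≤ 2 := Finset.card_le_two
  refine ⟨μ.toSet h \ {a}, Finset.sdiff_subset, by rw [hnew]; exact hcard, ?_⟩
  have hrest : Ph h {d} (μ.toSet h \ {a}) := by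
    have h2 := Finset.card_sdiff_add_card_eq_card (Finset.singleton_subset_iff.2 has)
    rw [Finset.card_singleton] at h2
    have h1 : (μ.toSet h \ {a}).card ≤ 1 := by omega
    rcases (μ.toSet h \ {a}).eq_empty_or_nonempty with h0 | ⟨e, he⟩
    · rw [h0]
      refine ((hresp h).1 (some d) none).2 ?_
      unfold Pt10 prefOfRank
      clear * -
      decide +revert
    · have hee : μ.toSet h \ {a} = {e} :=
        Finset.eq_singleton_iff_unique_mem.2
          ⟨he, fun x hx => Finset.card_le_one.1 h1 x hx e he⟩
      rw [hee]
      simp only [Finset.mem_sdiff, Finset.mem_singleton, hmem] at he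
      exact ((hresp h).1 (some d) (some e)).2 (hbest e he.2 he.1)
  have key := ((hresp h).2 {a} {d} (μ.toSet h \ {a})
    (fun x => had (Finset.mem_singleton.1 (x ▸ Finset.mem_univ d))) (by simpa using had)
    Finset.sdiff_disjoint hcard (by rw [hback]; exact hc)).2 hrest
  rwa [hback, ← hnew] at key

/-- Capacity two: no hospital employs three distinct doctors. -/
lemma not_three {h : Fin 3} {a b c : Fin 6} (ha : μ.assign a = some h) (hb : μ.assign b = some h)
    (hc : μ.assign c = some h) (hab : a ≠ b) (hac : a ≠ c) (hbc : b ≠ c) : False := by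
  have h3 : ({a, b, c} : Finset (Fin 6)) ⊆ Finset.univ.filter (fun d => μ.assign d = some h) := by
    intro x hx
    simp only [Finset.mem_insert, Finset.mem_singleton] at hx
    rcases hx with rfl | rfl | rfl <;> simpa
  have := (Finset.card_le_card h3).trans (μ.card_le h)
  rw [Finset.card_eq_three.2 ⟨a, b, c, hab, hac, hbc, rfl⟩] at this
  omega

end Responsive

/-! ### Nonexistence of a stable matching -/

/-- In the market of Example 2, where the couple's preference ranks the nine pairs of
hospitals as `(h₁,h₂) > (h₁,h₁) > (h₁,h₃) > (h₃,h₃) > (h₃,h₂) > (h₃,h₁) > (h₂,h₂) >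
(h₂,h₁) > (h₂,h₃)` and ranks every pair with an unmatched component below all of them,
no choice of hospital preferences over feasible sets responsive with respect to the
hospitals' respective individual rankings admits a stable matching. -/
theorem stmt_10
    (Pc : Option (Fin 3) × Option (Fin 3) → Option (Fin 3) × Option (Fin 3) → Prop)
    (Ph : Fin 3 → Finset (Fin 6) → Finset (Fin 6) → Prop)
    (hPc : IsCouplePref Pc)
    (hchain : ∀ a b a' b' : Fin 3, crank10 a b < crank10 a' b' →
      Pc (some a, some b) (some a', some b'))
    (hPh : ∀ h, IsFeasiblePref 2 (Ph h))
    (hresp : ∀ h, Responsive 2 (Ph h) (Pt10 h)) :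
    ∀ μ : Matching (Fin 3) (Fin 6) (fun _ => 2),
      ¬ Stable (k := 1) ![0] ![1] Pd10 (fun _ => Pc) Ph μ := by
  intro μ ⟨hS, hC⟩
  -- A hospital coveted by a single doctor is full of doctors it prefers to her.
  have single : ∀ (h : Fin 3) (s : Fin 6), s ≠ 0 → s ≠ 1 → Pd10 s (some h) (μ.assign s) →
      ∃ a b, a ≠ b ∧ μ.assign a = some h ∧ μ.assign b = some h ∧
        Pt10 h (some a) (some s) ∧ Pt10 h (some b) (some s) := by
    intro h s h0 h1 hP
    refine full_of_not_interested hresp (fun e => ?_) (fun hi => hS h s ?_ ⟨hP, hi⟩)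
    · rw [e] at hP
      exact lt_irrefl _ hP
    · simpa using ⟨h0, h1⟩
  have hC' : ∀ hf hm : Fin 3, ¬ blocksCouple Ph Pc 0 1 μ hf hm := hC 0
  have h_s3 : μ.assign 4 = some 0 := by
    by_contra hne
    have hP : Pd10 4 (some 0) (μ.assign 4) := by
      generalize μ.assign 4 = o at hne
      clear * - hne
      unfold Pd10 prefOfRank
      decide +revert
    obtain ⟨a, -, -, -, -, ha, -⟩ := single 0 4 (by decide) (by decide) hP
    clear * - ha
    unfold Pt10 prefOfRank at ha
    revert a
    decide
  have h_s4 : μ.assign 5 = some 1 := by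
    by_contra hne
    have hP : Pd10 5 (some 1) (μ.assign 5) := by
      generalize μ.assign 5 = o at hne
      clear * - hne
      unfold Pd10 prefOfRank
      decide +revert
    obtain ⟨a, -, -, -, -, ha, -⟩ := single 1 5 (by decide) (by decide) hP
    clear * - ha
    unfold Pt10 prefOfRank at ha
    revert a
    decide
  -- `s₁` holds a seat at `h₁` or `h₂`, since only `s₃` and `s₄` are ahead of her at `h₁`.
  have h_s1 : μ.assign 2 = some 0 ∨ μ.assign 2 = some 1 := by
    by_contra! hne
    have hP : Pd10 2 (some 0) (μ.assign 2) := by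
      generalize μ.assign 2 = o at hne
      clear * - hne
      unfold Pd10 prefOfRank
      decide +revert
    obtain ⟨a, b, hab, ha, hb, ha', hb'⟩ := single 0 2 (by decide) (by decide) hP
    have hor : a = 5 ∨ b = 5 := by
      clear * - hab ha' hb'
      unfold Pt10 prefOfRank at ha' hb'
      decide +revert
    rcases hor with rfl | rfl <;> simp_all
  -- If `h₂` refuses `m` because of `f`, the couple still moves.
  have case_f : μ.assign 0 ≠ some 1 := by
    intro hf
    have hs1 : μ.assign 2 = some 0 := h_s1.resolve_right fun h =>
      not_three hf h_s4 h (by decide) (by decide) (by decide)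
    have hm0 : μ.assign 1 ≠ some 0 := fun h =>
      not_three h_s3 hs1 h (by decide) (by decide) (by decide)
    have hm1 : μ.assign 1 ≠ some 1 := fun h =>
      not_three hf h_s4 h (by decide) (by decide) (by decide)
    have hm2 : μ.assign 1 = some 2 := by
      by_contra hm2
      have hm : μ.assign 1 = none := by
        generalize μ.assign 1 = o at *
        clear * - hm0 hm1 hm2
        decide +revert
      refine hC' 1 2 ⟨by rw [hf, hm]; exact hPc.2 1 2 _ (Or.inr rfl), fun _ h => absurd hf h,
        fun _ _ _ => ?_, fun _ h => absurd h hm2, fun h => absurd h (by decide)⟩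
      by_contra hn
      obtain ⟨a, b, hab, ha, hb, ha', hb'⟩ := full_of_not_interested hresp hm2 hn
      have hor : a = 4 ∨ a = 5 := by
        clear * - ha'
        unfold Pt10 prefOfRank at ha'
        decide +revert
      rcases hor with rfl | rfl <;> simp_all
    refine hC' 2 2 ⟨by rw [hf, hm2]; exact hchain _ _ _ _ (by decide), fun h => absurd rfl h,
      fun h => absurd rfl h, fun h => absurd rfl h, fun _ => ?_⟩
    rw [Finset.pair_comm]
    refine interested_pair hresp hm2 (by simp [hf]) fun e he1 he => ?_
    have h3 : e = 3 := by
      fin_cases e <;> simp_all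
    subst h3
    unfold Pt10 prefOfRank
    decide
  -- If `h₁` refuses `f` because of `s₁`, then `m` fills `h₂`, and the couple moves.
  have case_s1 : μ.assign 2 ≠ some 0 := by
    intro hs1
    have hf0 : μ.assign 0 ≠ some 0 := fun h =>
      not_three h_s3 hs1 h (by decide) (by decide) (by decide)
    have hm1 : μ.assign 1 = some 1 := by
      obtain ⟨a, b, hab, ha, hb, ha', hb'⟩ := single 1 2 (by decide) (by decide) (by
        rw [hs1]
        unfold Pd10 prefOfRank
        decide)
      have hor : a = 0 ∨ a = 4 ∨ a = 1 ∨ b = 0 ∨ b = 4 ∨ b = 1 := by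
        clear * - hab ha' hb'
        unfold Pt10 prefOfRank at ha' hb'
        decide +revert
      rcases hor with rfl | rfl | rfl | rfl | rfl | rfl <;> simp_all
    have hf2 : μ.assign 0 = some 2 := by
      by_contra hf2
      have hf : μ.assign 0 = none := by
        generalize μ.assign 0 = o at *
        clear * - hf0 case_f hf2
        decide +revert
      refine hC' 2 1 ⟨by rw [hf, hm1]; exact hPc.2 2 1 _ (Or.inl rfl), fun _ _ h => absurd hm1 h,
        fun _ h => absurd h hf2, fun _ _ _ => ?_, fun h => absurd h (by decide)⟩
      by_contra hn
      obtain ⟨a, b, hab, ha, hb, ha', hb'⟩ := full_of_not_interested hresp hf2 hn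
      have hor : a = 4 ∨ a = 5 ∨ a = 1 := by
        clear * - ha'
        unfold Pt10 prefOfRank at ha'
        decide +revert
      rcases hor with rfl | rfl | rfl <;> simp_all
    refine hC' 2 2 ⟨by rw [hf2, hm1]; exact hchain _ _ _ _ (by decide), fun h => absurd rfl h,
      fun h => absurd rfl h, fun h => absurd rfl h, fun _ => ?_⟩
    refine interested_pair hresp hf2 (by simp [hm1]) fun e he0 he => ?_
    have h3 : e = 3 := by
      fin_cases e <;> simp_all
    subst h3
    unfold Pt10 prefOfRank
    decide
  -- So `s₁` sits at `h₂`, where `m` would displace her, while `h₁` has room for `f`.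
  have hs1 : μ.assign 2 = some 1 := h_s1.resolve_left case_s1
  have hm1 : μ.assign 1 ≠ some 1 := fun h =>
    not_three h_s4 hs1 h (by decide) (by decide) (by decide)
  have int_m : hospInterested Ph μ 1 {1} := by
    by_contra hn
    obtain ⟨a, b, hab, ha, hb, ha', hb'⟩ := full_of_not_interested hresp hm1 hn
    have hor : a = 0 ∨ a = 4 ∨ b = 0 ∨ b = 4 := by
      clear * - hab ha' hb'
      unfold Pt10 prefOfRank at ha' hb'
      decide +revert
    rcases hor with rfl | rfl | rfl | rfl <;> simp_all
  have int_f : μ.assign 0 ≠ some 0 → hospInterested Ph μ 0 {0} := by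
    intro hf0
    by_contra hn
    obtain ⟨a, b, hab, ha, hb, ha', hb'⟩ := full_of_not_interested hresp hf0 hn
    have hor : a = 2 ∨ a = 5 ∨ b = 2 ∨ b = 5 := by
      clear * - hab ha' hb'
      unfold Pt10 prefOfRank at ha' hb'
      decide +revert
    rcases hor with rfl | rfl | rfl | rfl <;> simp_all
  refine hC' 0 1 ⟨?_, fun _ h _ => ⟨int_f h, int_m⟩, fun _ _ _ => int_m,
    fun _ h => absurd h hm1, fun h => absurd h (by decide)⟩
  rcases hf : μ.assign 0 with _ | a
  · exact hPc.2 0 1 _ (Or.inl rfl)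
  rcases hm : μ.assign 1 with _ | b
  · exact hPc.2 0 1 _ (Or.inr rfl)
  refine hchain _ _ _ _ ?_
  have hb : b ≠ 1 := fun h => hm1 (h ▸ hm)
  clear * - hb
  decide +revert

end CouplesMarket
end
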